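/- arXiv:0706.1138 — 3 statements merged into one kernel-verified Lean document; each statement's English description precedes it below -/
import Mathlib

section
/- Let (A, m, k) and (B, n, k') be Noetherian local rings and let φ : A → B be a local ring homomorphism (φ(m) ⊆ n). If dim B = dim A + dim(B ⊗_A k) and both A and B ⊗_A k = B/mB are regular local rings, then B is flat over A and B is a regular local ring. -/
/-- A Noetherian local ring whose maximal ideal can be generated by
Krull-dimension many elements, i.e. a regular local ring. -/
def IsRegularLocal (R : Type*) [CommRing R] : Prop :=
  IsNoetherianRing R ∧ ∃ _h : IsLocalRing R, ∃ s : Finset R,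
    Ideal.span (s : Set R) = IsLocalRing.maximalIdeal R ∧
    (s.card : WithBot ℕ∞) = ringKrullDim R

open TensorProduct

theorem aux_lTensor_inj {A B N M : Type*} [CommRing A] [CommRing B] [Algebra A B]
    [AddCommGroup N] [Module A N] [AddCommGroup M] [Module A M] (I : Ideal A)
    (hflat : Module.Flat (A ⧸ I) ((A ⧸ I) ⊗[A] B))
    (hN : Module.IsTorsionBySet A N I) (hM : Module.IsTorsionBySet A M I)
    (f : N →ₗ[A] M) (hf : Function.Injective f) : Function.Injective (f.lTensor B) := by
  rw [LinearMap.lTensor_inj_iff_rTensor_inj]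
  let := hN.module
  let := hM.module
  have : IsScalarTower A (A ⧸ I) N := hN.isScalarTower
  have : IsScalarTower A (A ⧸ I) M := hM.isScalarTower
  let g : N →ₗ[A ⧸ I] M :=
    { f with
      map_smul' := by
        intro r n
        obtain ⟨r, rfl⟩ := Ideal.Quotient.mk_surjective r
        exact f.map_smul r n }
  have hg : Function.Injective (g.rTensor ((A ⧸ I) ⊗[A] B)) :=
    Module.Flat.rTensor_preserves_injective_linearMap g hf
  let eN := AlgebraTensorModule.cancelBaseChange A (A ⧸ I) (A ⧸ I) N B
  let eM := AlgebraTensorModule.cancelBaseChange A (A ⧸ I) (A ⧸ I) M B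
  have key : ∀ u, f.rTensor B u = eM (g.rTensor _ (eN.symm u)) := by
    intro u
    induction u with
    | zero => simp
    | add u v hu hv => simp only [map_add, hu, hv]
    | tmul n b => simp [eN, eM, g]
  intro u v huv
  rw [key, key] at huv
  exact eN.symm.injective (hg (eM.injective huv))

theorem aux_lTensor_smul {A B N : Type*} [CommRing A] [CommRing B] [Algebra A B]
    [AddCommGroup N] [Module A N] (x : A) (w : B ⊗[A] N) :
    (LinearMap.lsmul A N x).lTensor B w = algebraMap A B x • w := by
  induction w with
  | zero => simp
  | add u v hu hv => simp only [map_add, hu, hv, smul_add]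
  | tmul b n => simp [TensorProduct.smul_tmul', TensorProduct.tmul_smul]

theorem aux_flat {A B : Type*} [CommRing A] [CommRing B] [IsLocalRing B]
    [IsNoetherianRing A] [IsNoetherianRing B] [Algebra A B] (x : A)
    (hxB : algebraMap A B x ∈ IsLocalRing.maximalIdeal B)
    (hB : ∀ b : B, algebraMap A B x * b = 0 → b = 0)
    (hflat : Module.Flat (A ⧸ Ideal.span {x}) ((A ⧸ Ideal.span {x}) ⊗[A] B)) :
    Module.Flat A B := by
  have tors : ∀ {N : Type _} [AddCommGroup N] [Module A N], (∀ n : N, x • n = 0) →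
      Module.IsTorsionBySet A N (Ideal.span {x} : Ideal A) := by
    intro N _ _ h n ⟨a, ha⟩
    obtain ⟨c, rfl⟩ := Ideal.mem_span_singleton'.1 ha
    simp [mul_smul, h]
  have regA : ∀ w : B ⊗[A] A, algebraMap A B x • w = 0 → w = 0 := by
    intro w hw
    have := congrArg (AlgebraTensorModule.rid A B B) hw
    rw [map_smul, map_zero, smul_eq_mul] at this
    have := hB _ this
    simpa using this
  suffices h : ∀ I : Ideal A, Function.Injective (I.subtype.lTensor B) by
    rw [Module.Flat.iff_lTensor_injective]
    intro I _
    exact h I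
  intro I
  induction I using WellFoundedGT.induction with
  | ind I ih =>
  by_cases hsat : ∀ a, x * a ∈ I → a ∈ I
  · -- saturated
    let K : Submodule B (B ⊗[A] I) := LinearMap.ker (I.subtype.baseChange B)
    have hK : K = ⊥ := by
      apply Submodule.eq_bot_of_le_smul_of_le_jacobson_bot (Ideal.span {algebraMap A B x}) K
        (IsNoetherian.noetherian K)
      · intro u hu
        have hu' : I.subtype.lTensor B u = 0 := hu
        let lI := LinearMap.lsmul A I x
        let lA := LinearMap.lsmul A A x
        let f : (I ⧸ LinearMap.range lI) →ₗ[A] (A ⧸ LinearMap.range lA) :=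
          Submodule.mapQ _ _ I.subtype (by
            rintro _ ⟨a, rfl⟩
            exact ⟨a, rfl⟩)
        have hf : Function.Injective f := by
          rw [← LinearMap.ker_eq_bot, LinearMap.ker_eq_bot']
          intro n hn
          obtain ⟨n, rfl⟩ := Submodule.Quotient.mk_surjective _ n
          simp only [f, Submodule.mapQ_apply] at hn
          rw [Submodule.Quotient.mk_eq_zero] at hn ⊢
          obtain ⟨a, ha⟩ := hn
          have ha' : x * a = n := ha
          exact ⟨⟨a, hsat a (ha' ▸ n.2)⟩, Subtype.ext ha'⟩
        have hinj := aux_lTensor_inj (B := B) _ hflat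
          (tors (by
            intro n
            obtain ⟨n, rfl⟩ := Submodule.Quotient.mk_surjective _ n
            rw [← Submodule.Quotient.mk_smul, Submodule.Quotient.mk_eq_zero]
            exact ⟨n, rfl⟩))
          (tors (by
            intro n
            obtain ⟨n, rfl⟩ := Submodule.Quotient.mk_surjective _ n
            rw [← Submodule.Quotient.mk_smul, Submodule.Quotient.mk_eq_zero]
            exact ⟨n, rfl⟩)) f hf
        have h0 : (Submodule.mkQ (LinearMap.range lI)).lTensor B u = 0 := by
          apply hinj
          rw [map_zero, ← LinearMap.comp_apply, ← LinearMap.lTensor_comp]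
          have : f ∘ₗ Submodule.mkQ (LinearMap.range lI) =
              Submodule.mkQ (LinearMap.range lA) ∘ₗ I.subtype := by
            ext; rfl
          rw [this, LinearMap.lTensor_comp, LinearMap.comp_apply, hu', map_zero]
        obtain ⟨v, hv⟩ := (lTensor_exact B (f := lI) (g := Submodule.mkQ (LinearMap.range lI))
          (LinearMap.exact_map_mkQ_range lI) (Submodule.mkQ_surjective _) u).1 h0
        rw [aux_lTensor_smul] at hv
        rw [← hv]
        refine Submodule.smul_mem_smul (Ideal.mem_span_singleton_self _) ?_
        show I.subtype.baseChange B v = 0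
        apply regA
        rw [← map_smul, hv]
        exact hu'
      · rw [Ideal.span_singleton_le_iff_mem]
        exact IsLocalRing.maximalIdeal_le_jacobson _ hxB
    have := LinearMap.ker_eq_bot.1 hK
    exact this
  · push Not at hsat
    obtain ⟨a₀, h1, h2⟩ := hsat
    let J : Ideal A := Submodule.comap (LinearMap.lsmul A A x) I
    have hIJ : I ≤ J := fun i hi => I.mul_mem_left x hi
    have hlt : I < J := lt_of_le_of_ne hIJ (fun h => h2 (by rw [h]; exact h1))
    have hJ := ih J hlt
    let ι : I →ₗ[A] J := Submodule.inclusion hIJ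
    let μ : J →ₗ[A] I := (LinearMap.lsmul A A x).restrict (fun a ha => ha)
    let lJ := LinearMap.lsmul A J x
    have hcomp : ι ∘ₗ μ = lJ := by ext; rfl
    let f : (I ⧸ LinearMap.range μ) →ₗ[A] (J ⧸ LinearMap.range lJ) :=
      Submodule.mapQ _ _ ι (by
        rintro _ ⟨a, rfl⟩
        exact ⟨a, rfl⟩)
    have hf : Function.Injective f := by
      rw [← LinearMap.ker_eq_bot, LinearMap.ker_eq_bot']
      intro n hn
      obtain ⟨n, rfl⟩ := Submodule.Quotient.mk_surjective _ n
      simp only [f, Submodule.mapQ_apply] at hn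
      rw [Submodule.Quotient.mk_eq_zero] at hn ⊢
      obtain ⟨a, ha⟩ := hn
      have ha' : x * (a : A) = n := congrArg Subtype.val ha
      exact ⟨a, Subtype.ext ha'⟩
    have hinj := aux_lTensor_inj (B := B) _ hflat
      (tors (by
        intro n
        obtain ⟨n, rfl⟩ := Submodule.Quotient.mk_surjective _ n
        rw [← Submodule.Quotient.mk_smul, Submodule.Quotient.mk_eq_zero]
        exact ⟨ι n, rfl⟩))
      (tors (by
        intro n
        obtain ⟨n, rfl⟩ := Submodule.Quotient.mk_surjective _ n
        rw [← Submodule.Quotient.mk_smul, Submodule.Quotient.mk_eq_zero]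
        exact ⟨n, rfl⟩)) f hf
    rw [← LinearMap.ker_eq_bot, LinearMap.ker_eq_bot']
    intro u hu
    have hu2 : ι.lTensor B u = 0 := by
      apply hJ
      rw [map_zero, ← LinearMap.comp_apply, ← LinearMap.lTensor_comp]
      exact hu
    have h0 : (Submodule.mkQ (LinearMap.range μ)).lTensor B u = 0 := by
      apply hinj
      rw [map_zero, ← LinearMap.comp_apply, ← LinearMap.lTensor_comp]
      have : f ∘ₗ Submodule.mkQ (LinearMap.range μ) =
          Submodule.mkQ (LinearMap.range lJ) ∘ₗ ι := by
        ext; rfl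
      rw [this, LinearMap.lTensor_comp, LinearMap.comp_apply, hu2, map_zero]
    obtain ⟨w, hw⟩ := (lTensor_exact B (f := μ) (g := Submodule.mkQ (LinearMap.range μ))
      (LinearMap.exact_map_mkQ_range μ) (Submodule.mkQ_surjective _) u).1 h0
    have hw0 : w = 0 := by
      apply hJ
      rw [map_zero]
      apply regA
      have h3 : lJ.lTensor B w = 0 := by
        rw [← hcomp, LinearMap.lTensor_comp, LinearMap.comp_apply, hw, hu2]
      rw [aux_lTensor_smul] at h3
      have h4 : J.subtype.baseChange B (algebraMap A B x • w) = 0 := by rw [h3, map_zero]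
      rw [map_smul] at h4
      exact h4
    rw [← hw, hw0, map_zero]

theorem aux_flat_quot {A B : Type*} [CommRing A] [CommRing B] [Algebra A B] (I : Ideal A)
    (h : Module.Flat (A ⧸ I) (B ⧸ I.map (algebraMap A B))) :
    Module.Flat (A ⧸ I) ((A ⧸ I) ⊗[A] B) := by
  let e : ((A ⧸ I) ⊗[A] B) ≃ₗ[A] (B ⧸ I.map (algebraMap A B)) :=
    (quotTensorEquivQuotSMul B I).trans
      ((Submodule.quotEquivOfEq (I • (⊤ : Submodule A B))
        ((I.map (algebraMap A B)).restrictScalars A) (Ideal.smul_top_eq_map I)).trans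
        (Submodule.Quotient.restrictScalarsEquiv A _))
  exact Module.Flat.of_linearEquiv (LinearEquiv.extendScalarsOfSurjective
    Ideal.Quotient.mk_surjective e)

theorem aux_dim_le {R : Type*} [CommRing R] [IsLocalRing R] [IsNoetherianRing R]
    (s : Finset R) (hs : Ideal.span (s : Set R) = IsLocalRing.maximalIdeal R) :
    ringKrullDim R ≤ s.card := by
  refine (ringKrullDim_le_spanFinrank_maximalIdeal R).trans ?_
  rw [← hs]
  have := Submodule.spanFinrank_span_le_ncard_of_finite (R := R) s.finite_toSet
  rw [Set.ncard_coe_finset] at this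
  exact_mod_cast this

theorem aux_quot_dim {R : Type*} [CommRing R] [IsLocalRing R] [IsNoetherianRing R]
    (y : R) (hy : y ∈ IsLocalRing.maximalIdeal R) (d : ℕ)
    (hd : ((d + 1 : ℕ) : WithBot ℕ∞) ≤ ringKrullDim R) :
    (d : WithBot ℕ∞) ≤ ringKrullDim (R ⧸ Ideal.span {y}) := by
  have h : ringKrullDim R ≤ ringKrullDim (R ⧸ Ideal.span {y}) + 1 := by
    rw [← IsLocalRing.maximalIdeal_height_eq_ringKrullDim]
    exact Ideal.height_le_ringKrullDim_quotient_add_one hy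
  have h2 := hd.trans h
  generalize ringKrullDim (R ⧸ Ideal.span {y}) = D at h2
  induction D with
  | bot => simp at h2
  | coe D =>
    norm_cast at h2 ⊢
    induction D with
    | top => simp
    | coe D => norm_cast at h2 ⊢; omega

theorem aux_quot_gen {R : Type*} [CommRing R] [IsLocalRing R]
    (y : R) (J : Ideal R) (hJ : J = Ideal.span {y}) (T : Set R) [IsLocalRing (R ⧸ J)]
    (hT : Ideal.span (insert y T) = IsLocalRing.maximalIdeal R) :
    Ideal.span (Ideal.Quotient.mk J '' T) = IsLocalRing.maximalIdeal (R ⧸ J) := by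
  rw [← IsLocalRing.map_maximalIdeal_of_surjective _
    (Ideal.Quotient.mk_surjective (I := J)), ← hT, Ideal.map_span,
    Set.image_insert_eq, Ideal.span_insert]
  have : (Ideal.Quotient.mk J) y = 0 :=
    Ideal.Quotient.eq_zero_iff_mem.2 (hJ ▸ Ideal.mem_span_singleton_self y)
  simp [this]

theorem aux_local_quot {R : Type*} [CommRing R] [IsLocalRing R]
    (I : Ideal R) (h : I ≤ IsLocalRing.maximalIdeal R) : IsLocalRing (R ⧸ I) := by
  have : Nontrivial (R ⧸ I) := Ideal.Quotient.nontrivial_iff.2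
    (fun h' => Ideal.IsPrime.ne_top' (top_le_iff.1 (h' ▸ h)))
  exact IsLocalRing.of_surjective' _ Ideal.Quotient.mk_surjective

theorem aux_domain (d : ℕ) : ∀ (R : Type*) [CommRing R] [IsLocalRing R] [IsNoetherianRing R]
    (s : Finset R) (_ : Ideal.span (s : Set R) = IsLocalRing.maximalIdeal R)
    (_ : s.card ≤ d) (_ : (d : WithBot ℕ∞) ≤ ringKrullDim R), IsDomain R := by
  classical
  induction d with
  | zero =>
    intro R _ _ _ s hs hc hd
    have : s = ∅ := by simpa using hc
    subst this
    have : IsField R := by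
      rw [IsLocalRing.isField_iff_maximalIdeal_eq, ← hs]; simp
    exact this.isDomain
  | succ d ih =>
    intro R _ _ _ s hs hc hd
    have hne : ringKrullDim R ≠ 0 := by
      intro h
      rw [h] at hd
      norm_cast at hd
    -- choose y
    obtain ⟨y, hym, hy2, hyp⟩ : ∃ y ∈ IsLocalRing.maximalIdeal R,
        y ∉ (IsLocalRing.maximalIdeal R) ^ 2 ∧ ∀ p ∈ minimalPrimes R, y ∉ p := by
      by_contra hcon
      push Not at hcon
      have hfin : (insert ((IsLocalRing.maximalIdeal R) ^ 2) (minimalPrimes R)).Finite :=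
        (minimalPrimes.finite_of_isNoetherianRing R).insert _
      have := (Ideal.subset_union_prime_finite hfin (f := id)
        ((IsLocalRing.maximalIdeal R) ^ 2) ((IsLocalRing.maximalIdeal R) ^ 2)
        (I := IsLocalRing.maximalIdeal R) (by
          intro i hi h1 _
          rcases hi with hi | hi
          · exact absurd hi h1
          · exact hi.1.1)).1 (by
          intro y hy
          simp only [Set.mem_iUnion]
          by_cases h2 : y ∈ (IsLocalRing.maximalIdeal R) ^ 2
          · exact ⟨_, Set.mem_insert _ _, h2⟩
          · obtain ⟨p, hp, hyp⟩ := hcon y hy h2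
            exact ⟨p, Set.mem_insert_of_mem _ hp, hyp⟩)
      obtain ⟨p, hp, hle⟩ := this
      rcases hp with rfl | hp
      · exact absurd hle (not_le_of_gt (IsLocalRing.maximalIdeal_sq_lt_of_ringKrullDim_ne_zero hne))
      · have hpp : p.IsPrime := hp.1.1
        have : IsLocalRing.maximalIdeal R = p :=
          le_antisymm hle (IsLocalRing.le_maximalIdeal hpp.ne_top)
        apply hne
        rw [← IsLocalRing.maximalIdeal_height_eq_ringKrullDim, this]
        have : p.height = 0 := by
          rw [Ideal.height_eq_zero_iff]; exact hp
        simp [this]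
    -- exchange
    obtain ⟨t, htc, ht⟩ : ∃ t : Finset R, t.card ≤ d ∧
        Ideal.span (insert y (t : Set R)) = IsLocalRing.maximalIdeal R := by
      have hys : y ∈ Submodule.span R (s : Set R) := by
        have := hym
        rw [← hs] at this
        exact this
      obtain ⟨c, -, hc'⟩ := Submodule.mem_span_finset.1 hys
      obtain ⟨a, has, hca⟩ : ∃ a ∈ s, IsUnit (c a) := by
        by_contra hcon
        push Not at hcon
        apply hy2
        rw [← hc', pow_two]
        refine Ideal.sum_mem _ fun a ha => Ideal.mul_mem_mul ((IsLocalRing.mem_maximalIdeal _).2 (hcon a ha)) ?_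
        rw [← hs]
        exact Ideal.subset_span ha
      refine ⟨s.erase a, by rw [Finset.card_erase_of_mem has]; omega, le_antisymm ?_ ?_⟩
      · rw [Ideal.span_le]
        rintro z (rfl | hz)
        · exact hym
        · rw [← hs]; exact Ideal.subset_span (Finset.mem_of_mem_erase hz)
      · rw [← hs, Ideal.span_le]
        intro z hz
        by_cases hza : z = a
        · subst hza
          rw [← Finset.add_sum_erase _ _ has] at hc'
          have : c z * z ∈ Ideal.span (insert y ((s.erase z : Finset R) : Set R)) := by
            have h1 : c z * z = y - ∑ x ∈ s.erase z, c x • x := by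
              rw [← hc']; simp
            rw [h1]
            refine Ideal.sub_mem _ (Ideal.subset_span (Set.mem_insert _ _)) ?_
            refine Ideal.sum_mem _ fun b hb => Ideal.mul_mem_left _ _ ?_
            exact Ideal.subset_span (Set.mem_insert_of_mem _ hb)
          exact (Ideal.unit_mul_mem_iff_mem _ hca).1 this
        · exact Ideal.subset_span (Set.mem_insert_of_mem _ (Finset.mem_erase.2 ⟨hza, hz⟩))
    have hloc : IsLocalRing (R ⧸ Ideal.span {y}) :=
      aux_local_quot _ ((Ideal.span_singleton_le_iff_mem _).2 hym)
    have hdom : IsDomain (R ⧸ Ideal.span {y}) := by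
      apply ih (R ⧸ Ideal.span {y}) (t.image (Ideal.Quotient.mk _))
      · rw [Finset.coe_image]
        exact aux_quot_gen y _ rfl _ ht
      · exact Finset.card_image_le.trans htc
      · exact aux_quot_dim y hym d hd
    have hprime : (Ideal.span {y}).IsPrime := (Ideal.Quotient.isDomain_iff_prime _).1 hdom
    obtain ⟨p, hp, hpy⟩ := Ideal.exists_minimalPrimes_le (I := ⊥) (J := Ideal.span {y}) bot_le
    have hyp' := hyp p hp
    have hpp : p.IsPrime := hp.1.1
    have hp0 : p = ⊥ := by
      apply Submodule.eq_bot_of_le_smul_of_le_jacobson_bot (Ideal.span {y}) p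
        (IsNoetherian.noetherian p)
      · intro z hz
        obtain ⟨b, rfl⟩ := Ideal.mem_span_singleton'.1 (hpy hz)
        rw [mul_comm]
        exact Submodule.smul_mem_smul (Ideal.mem_span_singleton_self y)
          ((hpp.mem_or_mem hz).resolve_right hyp')
      · rw [Ideal.span_singleton_le_iff_mem]
        exact IsLocalRing.maximalIdeal_le_jacobson _ hym
    rw [hp0] at hpp
    exact IsDomain.of_bot_isPrime R

theorem aux_core (d e : ℕ) : ∀ (A : Type*) (B : Type*) [CommRing A] [CommRing B] [IsLocalRing A]
    [IsLocalRing B] [IsNoetherianRing A] [IsNoetherianRing B] [Algebra A B]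
    (s : Finset A) (t : Finset B)
    (_ : Ideal.span (s : Set A) = IsLocalRing.maximalIdeal A)
    (_ : Ideal.span (algebraMap A B '' s ∪ t) = IsLocalRing.maximalIdeal B)
    (_ : s.card ≤ d) (_ : t.card ≤ e) (_ : ((d + e : ℕ) : WithBot ℕ∞) ≤ ringKrullDim B),
    Module.Flat A B := by
  classical
  induction d with
  | zero =>
    intro A B _ _ _ _ _ _ _ s t hs ht hsc htc hd
    have : s = ∅ := by simpa using hsc
    subst this
    have : IsField A := by
      rw [IsLocalRing.isField_iff_maximalIdeal_eq, ← hs]; simp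
    let := this.toField
    infer_instance
  | succ d ih =>
    intro A B _ _ _ _ _ _ _ s t hs ht hsc htc hd
    have hBdom : IsDomain B := by
      apply aux_domain (d + 1 + e) B (s.image (algebraMap A B) ∪ t)
      · rw [Finset.coe_union, Finset.coe_image, ht]
      · refine (Finset.card_union_le _ _).trans ?_
        have := Finset.card_image_le (s := s) (f := algebraMap A B)
        omega
      · exact hd
    rcases s.eq_empty_or_nonempty with rfl | ⟨x, hx⟩
    · have : IsField A := by
        rw [IsLocalRing.isField_iff_maximalIdeal_eq, ← hs]; simp
      let := this.toField
      infer_instance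
    set s' := s.erase x with hs'
    have hss : insert x s' = s := Finset.insert_erase hx
    have hsc' : s'.card ≤ d := by rw [hs', Finset.card_erase_of_mem hx]; omega
    have hxm : x ∈ IsLocalRing.maximalIdeal A := hs ▸ Ideal.subset_span hx
    have hxn : algebraMap A B x ∈ IsLocalRing.maximalIdeal B :=
      ht ▸ Ideal.subset_span (Or.inl ⟨x, hx, rfl⟩)
    have hspl : (algebraMap A B '' s ∪ t : Set B) =
        insert (algebraMap A B x) (algebraMap A B '' s' ∪ t) := by
      rw [← hss, Finset.coe_insert, Set.image_insert_eq, Set.insert_union]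
    have hx0 : algebraMap A B x ≠ 0 := by
      intro h0
      rw [hspl, h0, Ideal.span_insert_zero] at ht
      have h1 := aux_dim_le (s'.image (algebraMap A B) ∪ t)
        (by rw [Finset.coe_union, Finset.coe_image, ht])
      have h2 := hd.trans h1
      norm_cast at h2
      have h3 := Finset.card_union_le (s'.image (algebraMap A B)) t
      have := Finset.card_image_le (s := s') (f := algebraMap A B)
      omega
    apply aux_flat x hxn (fun b hb => (mul_eq_zero.1 hb).resolve_left hx0)
    apply aux_flat_quot
    have hmap : (Ideal.span {x}).map (algebraMap A B) = Ideal.span {algebraMap A B x} := by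
      rw [Ideal.map_span, Set.image_singleton]
    have l1 : IsLocalRing (A ⧸ Ideal.span {x}) :=
      aux_local_quot _ ((Ideal.span_singleton_le_iff_mem _).2 hxm)
    have l2' : IsLocalRing (B ⧸ Ideal.span {algebraMap A B x}) :=
      aux_local_quot _ ((Ideal.span_singleton_le_iff_mem _).2 hxn)
    have l2 : IsLocalRing (B ⧸ (Ideal.span {x}).map (algebraMap A B)) := by
      rw [hmap]; exact l2'
    apply ih (A ⧸ Ideal.span {x}) (B ⧸ (Ideal.span {x}).map (algebraMap A B))
      (s'.image (Ideal.Quotient.mk _)) (t.image (Ideal.Quotient.mk _))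
    · rw [Finset.coe_image]
      apply aux_quot_gen x _ rfl
      rw [← Finset.coe_insert, hss, hs]
    · have himg : (algebraMap (A ⧸ Ideal.span {x}) (B ⧸ (Ideal.span {x}).map (algebraMap A B)) ''
          (s'.image (Ideal.Quotient.mk (Ideal.span {x})) : Finset _) ∪
          (t.image (Ideal.Quotient.mk ((Ideal.span {x}).map (algebraMap A B))) : Finset _)) =
          Ideal.Quotient.mk ((Ideal.span {x}).map (algebraMap A B)) ''
            (algebraMap A B '' s' ∪ t) := by
        rw [Finset.coe_image, Finset.coe_image, Set.image_union, Set.image_image, Set.image_image]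
        rfl
      rw [himg]
      exact aux_quot_gen (algebraMap A B x) _ hmap (algebraMap A B '' s' ∪ t) (by rw [← hspl, ht])
    · exact Finset.card_image_le.trans hsc'
    · exact Finset.card_image_le.trans htc
    · rw [hmap]
      exact aux_quot_dim _ hxn (d + e) (by convert hd using 2; omega)

/-- Let `(A, m)` and `(B, n)` be Noetherian local rings and `φ : A → B` a local homomorphism.
If `dim B = dim A + dim (B ⊗_A A/m)` and both `A` and `B ⊗_A A/m = B/mB` are regular, then
`B` is flat over `A` and `B` is regular. -/
theorem flat_and_regular_of_regular_fiber
    (A B : Type*) [CommRing A] [CommRing B] [IsLocalRing A] [IsLocalRing B]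
    [IsNoetherianRing A] [IsNoetherianRing B] [Algebra A B]
    [IsLocalHom (algebraMap A B)]
    (hdim : ringKrullDim B =
      ringKrullDim A + ringKrullDim (B ⧸ (IsLocalRing.maximalIdeal A).map (algebraMap A B)))
    (hA : IsRegularLocal A)
    (hfib : IsRegularLocal (B ⧸ (IsLocalRing.maximalIdeal A).map (algebraMap A B))) :
    Module.Flat A B ∧ IsRegularLocal B := by

  classical
  generalize hI : (IsLocalRing.maximalIdeal A).map (algebraMap A B) = I at hdim hfib
  obtain ⟨-, lA, s, hs, hsc⟩ := hA
  obtain ⟨-, lF, t, ht, htc⟩ := hfib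
  rw [← hsc, ← htc] at hdim
  obtain ⟨g, hg⟩ := (Ideal.Quotient.mk_surjective (I := I)).hasRightInverse
  let t' : Finset B := t.image g
  have htc' : t'.card ≤ t.card := Finset.card_image_le
  have hsI : I = Ideal.span (algebraMap A B '' s) := by
    rw [← hI, ← Ideal.map_span, hs]
  have hgen : Ideal.span (algebraMap A B '' s ∪ t') = IsLocalRing.maximalIdeal B := by
    have h1 : Ideal.map (Ideal.Quotient.mk I) (Ideal.span (algebraMap A B '' s ∪ t')) =
        Ideal.map (Ideal.Quotient.mk I) (IsLocalRing.maximalIdeal B) := by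
      rw [IsLocalRing.map_maximalIdeal_of_surjective _ Ideal.Quotient.mk_surjective, ← ht,
        Ideal.span_union, Ideal.map_sup, ← hsI, Ideal.map_quotient_self, bot_sup_eq,
        Ideal.map_span, Finset.coe_image, Set.image_image]
      simp [hg _]
    have h2 := congrArg (Ideal.comap (Ideal.Quotient.mk I)) h1
    rw [Ideal.comap_map_of_surjective' _ Ideal.Quotient.mk_surjective,
      Ideal.comap_map_of_surjective' _ Ideal.Quotient.mk_surjective, Ideal.mk_ker] at h2
    rw [sup_eq_left.2 (by rw [hsI, Ideal.span_union]; exact le_sup_left),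
      sup_eq_left.2 (hI ▸ IsLocalRing.map_maximalIdeal_le (algebraMap A B))] at h2
    exact h2
  have hd : ((s.card + t.card : ℕ) : WithBot ℕ∞) ≤ ringKrullDim B := by
    rw [hdim]; norm_cast
  refine ⟨aux_core s.card t.card A B s t' hs hgen le_rfl htc' hd, inferInstance, inferInstance,
    s.image (algebraMap A B) ∪ t', by rw [Finset.coe_union, Finset.coe_image, hgen], ?_⟩
  apply le_antisymm
  · refine le_trans ?_ hd
    have h3 := Finset.card_union_le (s.image (algebraMap A B)) t'
    have := Finset.card_image_le (s := s) (f := algebraMap A B)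
    exact_mod_cast (by omega : _ ≤ s.card + t.card)
  · exact aux_dim_le _ (by rw [Finset.coe_union, Finset.coe_image, hgen])
end

section
/- Let k be an algebraically closed field of characteristic zero, let B = k[Y_1, ..., Y_n] be a polynomial ring, and let D be a k-affine domain. If D is a finite etale extension of B (i.e., there is an injective k-algebra homomorphism B → D that is module-finite, unramified, and flat), then D = B, i.e., the homomorphism is an isomorphism. -/
section
open Polynomial
open scoped WithZero

section core
variable {K L : Type*} [Field K] [CharZero K] [Field L] [Algebra K L]
  (v : Valuation L ℤᵐ⁰) (hK : ∀ c : K, v (algebraMap K L c) ≤ 1)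

include hK in
omit [CharZero K] in
theorem psc_v_const {c : K} (hc : c ≠ 0) : v (algebraMap K L c) = 1 := by
  have h1 := hK c
  have h2 := hK c⁻¹
  refine le_antisymm h1 ?_
  have : v (algebraMap K L c) * v (algebraMap K L c⁻¹) = 1 := by
    rw [← map_mul, ← map_mul, mul_inv_cancel₀ hc, map_one, map_one]
  calc (1 : ℤᵐ⁰) = v (algebraMap K L c) * v (algebraMap K L c⁻¹) := this.symm
    _ ≤ v (algebraMap K L c) * 1 := by gcongr
    _ = _ := mul_one _

include hK in
omit [CharZero K] in
theorem psc_v_aeval {u : L} (hu : v u ≤ 1) (p : K[X]) : v (aeval u p) ≤ 1 := by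
  rw [aeval_eq_sum_range]
  refine v.map_sum_le fun i _ => ?_
  rw [Algebra.smul_def, map_mul, map_pow]
  exact mul_le_one' (hK _) (pow_le_one' hu i)

include hK in
omit [CharZero K] in
theorem psc_v_sub {u b : L} (hu : v u ≤ 1) (hb : v b ≤ 1) (p : K[X]) :
    v (aeval u p - aeval b p) ≤ v (u - b) := by
  have hp : ∀ n : ℕ, v (u ^ n - b ^ n) ≤ v (u - b) := by
    intro n
    induction n with
    | zero => simp
    | succ n ih =>
      have e : u ^ (n + 1) - b ^ (n + 1) = u * (u ^ n - b ^ n) + b ^ n * (u - b) := by ring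
      rw [e]
      refine v.map_add_le ?_ ?_
      · rw [map_mul]
        calc _ ≤ 1 * v (u - b) := mul_le_mul' hu ih
          _ = _ := one_mul _
      · rw [map_mul, map_pow]
        calc _ ≤ 1 * v (u - b) := mul_le_mul' (pow_le_one' hb n) le_rfl
          _ = _ := one_mul _
  rw [aeval_eq_sum_range, aeval_eq_sum_range, ← Finset.sum_sub_distrib]
  refine v.map_sum_le fun i _ => ?_
  rw [← smul_sub, Algebra.smul_def, map_mul]
  calc _ ≤ 1 * v (u - b) := mul_le_mul' (hK _) (hp i)
    _ = _ := one_mul _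

include hK in
theorem psc_res {u : L} (hu : v u ≤ 1) (h : ∃ q : K[X], q ≠ 0 ∧ v (aeval u q) < 1) :
    ∃ q : K[X], v (aeval u q) < 1 ∧ v (aeval u (derivative q)) = 1 := by
  classical
  have h' : ∃ n, ∃ q : K[X], q ≠ 0 ∧ v (aeval u q) < 1 ∧ q.natDegree = n := by
    obtain ⟨q, h1, h2⟩ := h
    exact ⟨_, q, h1, h2, rfl⟩
  obtain ⟨q, h1, h2, h3⟩ := Nat.find_spec h'
  have hdeg : q.natDegree ≠ 0 := by
    intro h0
    rw [natDegree_eq_zero] at h0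
    obtain ⟨c, rfl⟩ := h0
    rw [aeval_C, psc_v_const v hK (by rintro rfl; simp at h1)] at h2
    exact lt_irrefl _ h2
  refine ⟨q, h2, le_antisymm (psc_v_aeval v hK hu _) ?_⟩
  by_contra hlt
  rw [not_le] at hlt
  have hd : q.derivative.natDegree < q.natDegree := natDegree_derivative_lt hdeg
  rw [h3] at hd
  refine Nat.find_min h' hd ⟨_, ?_, hlt, rfl⟩
  intro h0
  exact hdeg (derivative_eq_zero.1 h0)

variable (θ : Derivation K L L) (t : L) (ht0 : t ≠ 0) (ht : v t < 1) (hθ : θ t = -t)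

include hK ht0 ht hθ in
theorem psc_norm {x : L} (hx : x ≠ 0) (h : 1 < v (θ x / x)) :
    ∃ u : L, v u = 1 ∧ v (θ u) = v (θ x / x) := by
  obtain ⟨a, ha⟩ : ∃ a : ℤ, v x = WithZero.exp a :=
    ⟨_, (WithZero.exp_log (v.ne_zero_iff.2 hx)).symm⟩
  obtain ⟨b, hb⟩ : ∃ a : ℤ, v t = WithZero.exp a :=
    ⟨_, (WithZero.exp_log (v.ne_zero_iff.2 ht0)).symm⟩
  have hb0 : b < 0 := by
    rw [hb, ← WithZero.exp_zero, WithZero.exp_lt_exp] at ht; exact ht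
  have hu : v (x ^ b * t ^ (-a)) = 1 := by
    rw [map_mul, map_zpow₀, map_zpow₀, ha, hb, ← WithZero.exp_zsmul, ← WithZero.exp_zsmul,
      ← WithZero.exp_add, WithZero.exp_eq_one]
    simp only [smul_eq_mul]; ring
  refine ⟨x ^ b * t ^ (-a), hu, ?_⟩
  have e : θ (x ^ b * t ^ (-a)) = (x ^ b * t ^ (-a)) * ((b : L) * (θ x / x) + (a : L)) := by
    rw [Derivation.leibniz, Derivation.leibniz_zpow, Derivation.leibniz_zpow, hθ,
      zpow_sub_one₀ hx, zpow_sub_one₀ ht0]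
    simp only [smul_eq_mul, zsmul_eq_mul]
    push_cast
    field_simp
    ring
  have hint : ∀ m : ℤ, (m : L) = algebraMap K L (m : K) := fun m => by simp
  have hbv : v ((b : L) * (θ x / x)) = v (θ x / x) := by
    rw [map_mul, hint, psc_v_const v hK (by exact_mod_cast hb0.ne), one_mul]
  rw [e, map_mul, hu, one_mul, Valuation.map_add_eq_of_lt_left, hbv]
  rw [hbv, hint]
  exact (hK _).trans_lt h

include hK ht0 ht hθ in
theorem psc_core (C : ℤ) (hb : ∀ u, v u ≤ 1 → v (θ u) ≤ WithZero.exp C)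
    (hres : ∀ u, v u ≤ 1 → ∃ q : K[X], q ≠ 0 ∧ v (aeval u q) < 1) (x : L) :
    v (θ x) ≤ v x := by
  by_contra hlt
  rw [not_le] at hlt
  have hx : x ≠ 0 := by rintro rfl; simp at hlt
  have hx1 : 1 < v (θ x / x) := by
    rw [map_div₀]; exact (one_lt_div₀ (by simpa [zero_lt_iff] using hx)).2 hlt
  obtain ⟨u, hu1, hu2⟩ := psc_norm v hK θ t ht0 ht hθ hx hx1
  have key : ∀ n : ℕ, ∃ u, v u = 1 ∧ 1 < v (θ u) ∧ WithZero.exp (n : ℤ) ≤ v (θ u) := by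
    intro n
    induction n with
    | zero => exact ⟨u, hu1, hu2 ▸ hx1, by simpa using (hu2 ▸ hx1).le⟩
    | succ n ih =>
      obtain ⟨u, h1, h2, h3⟩ := ih
      obtain ⟨q, hq1, hq2⟩ := psc_res v hK h1.le (hres u h1.le)
      have hθy : v (θ (aeval u q)) = v (θ u) := by
        rw [Derivation.map_aeval, smul_eq_mul, map_mul, hq2, one_mul]
      have hy0 : aeval u q ≠ 0 := by
        intro h0
        rw [h0, map_zero, map_zero] at hθy
        rw [← hθy] at h2
        exact absurd h2 (by simp)
      obtain ⟨a, ha⟩ : ∃ a : ℤ, v (aeval u q) = WithZero.exp a :=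
        ⟨_, (WithZero.exp_log (v.ne_zero_iff.2 hy0)).symm⟩
      have hθu0 : v (θ u) ≠ 0 := by
        intro h0; rw [h0] at h2; exact absurd h2 (by simp)
      obtain ⟨g, hg⟩ : ∃ a : ℤ, v (θ u) = WithZero.exp a :=
        ⟨_, (WithZero.exp_log hθu0).symm⟩
      rw [ha, ← WithZero.exp_zero, WithZero.exp_lt_exp] at hq1
      rw [hg, WithZero.exp_le_exp] at h3
      have hv : v (θ (aeval u q) / aeval u q) = WithZero.exp (g - a) := by
        rw [map_div₀, hθy, hg, ha, WithZero.exp_sub]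
      have hgt : 1 < v (θ (aeval u q) / aeval u q) := by
        rw [hv, ← WithZero.exp_zero, WithZero.exp_lt_exp]; omega
      obtain ⟨u', h1', h2'⟩ := psc_norm v hK θ t ht0 ht hθ hy0 hgt
      refine ⟨u', h1', h2' ▸ hgt, ?_⟩
      rw [h2', hv, WithZero.exp_le_exp]; push_cast; omega
  obtain ⟨u, h1, h2, h3⟩ := key (C.toNat + 1)
  have := h3.trans (hb u h1.le)
  rw [WithZero.exp_le_exp] at this
  omega

end core

section onevar

theorem psc_int_val {R L Γ : Type*} [CommRing R] [Field L] [LinearOrderedCommGroupWithZero Γ]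
    (v : Valuation L Γ) (φ : R →+* L) (h : ∀ r, v (φ r) ≤ 1) {f : L}
    (hf : φ.IsIntegralElem f) : v f ≤ 1 := by
  obtain ⟨p, hp, hpf⟩ := hf
  have h2 : IsIntegral v.integer f := by
    refine ⟨p.map (φ.codRestrict v.integer h), hp.map _, ?_⟩
    rw [eval₂_map]
    exact hpf
  exact (Valuation.integer.integers v).mem_of_integral h2

theorem psc_both {K L : Type*} [Field K] [Field L] [Algebra K L] (y f : L)
    (h1 : ((aeval y : K[X] →ₐ[K] L) : K[X] →+* L).IsIntegralElem f)
    (h2 : ((aeval y⁻¹ : K[X] →ₐ[K] L) : K[X] →+* L).IsIntegralElem f) : IsIntegral K f := by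
  let S := Subring.closure (Set.range (algebraMap K L))
  have hS : S = (algebraMap K L).range := by
    exact Subring.closure_eq (algebraMap K L).range
  have hf : f ∈ (integralClosure S L).toSubring := by
    rw [← iInf_valuationSubring_superset, Subring.mem_iInf]
    rintro ⟨V, hV⟩
    have hK : ∀ c : K, V.valuation (algebraMap K L c) ≤ 1 := fun c =>
      (V.valuation_le_one_iff _).2 (hV ⟨c, rfl⟩)
    change f ∈ V
    rw [← V.valuation_le_one_iff]
    have aux : ∀ u : L, u ∈ V →
        ((aeval u : K[X] →ₐ[K] L) : K[X] →+* L).IsIntegralElem f → V.valuation f ≤ 1 := by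
      intro u hu hi
      refine psc_int_val V.valuation _ ?_ hi
      intro p
      change V.valuation (aeval u p) ≤ 1
      rw [aeval_eq_sum_range]
      refine Valuation.map_sum_le _ fun i _ => ?_
      rw [Algebra.smul_def, map_mul, map_pow]
      exact mul_le_one' (hK _) (pow_le_one' ((V.valuation_le_one_iff _).2 hu) i)
    rcases V.mem_or_inv_mem y with h | h
    · exact aux _ h h1
    · exact aux _ h h2
  have hf' : IsIntegral S f := hf
  have hmem : ∀ c : K, algebraMap K L c ∈ S := fun c => Subring.subset_closure ⟨c, rfl⟩
  let : Algebra K S := ((algebraMap K L).codRestrict S hmem).toAlgebra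
  have : IsScalarTower K S L := IsScalarTower.of_algebraMap_eq fun _ => rfl
  have : Algebra.IsIntegral K S := by
    refine ⟨fun s => ?_⟩
    have hs : (s : L) ∈ (algebraMap K L).range := hS ▸ s.2
    obtain ⟨c, hc⟩ := hs
    have : s = algebraMap K S c := Subtype.ext hc.symm
    rw [this]
    exact isIntegral_algebraMap
  exact isIntegral_trans f hf'

theorem psc_alg_const {K L : Type*} [Field K] [CharZero K] [Field L] [Algebra K L]
    (δ : Derivation K L L) {f : L} (hf : IsIntegral K f) : δ f = 0 := by
  have h := δ.map_aeval (minpoly K f) f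
  rw [minpoly.aeval, map_zero, smul_eq_mul, eq_comm, mul_eq_zero] at h
  refine h.resolve_left ?_
  exact (minpoly.irreducible hf).separable.aeval_derivative_ne_zero (minpoly.aeval K f)

open IsDedekindDomain in
theorem psc_onevar {K F L : Type*} [Field K] [CharZero K] [Field L] [Algebra K L]
    [Field F] [Algebra K[X] F] [IsFractionRing K[X] F] [Algebra K[X] L] [Algebra F L]
    [IsScalarTower K[X] F L] [IsScalarTower K K[X] L] [FiniteDimensional F L]
    (δ : Derivation K L L) (y : L) (hy : y⁻¹ = algebraMap K[X] L X) (hδ : δ y = 1) (f : L)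
    (hf : ∀ n : ℕ, ((aeval y : K[X] →ₐ[K] L) : K[X] →+* L).IsIntegralElem (δ^[n] f)) :
    ∃ n : ℕ, δ^[n] f = 0 := by
  classical
  have hy0 : y ≠ 0 := by rintro rfl; simp at hδ
  have : CharZero F := by
    have : CharZero K[X] := inferInstance
    exact charZero_of_injective_algebraMap (IsFractionRing.injective K[X] F)
  let A := integralClosure K[X] L
  have : IsDedekindDomain A := IsIntegralClosure.isDedekindDomain K[X] F L A
  have : IsFractionRing A L := IsIntegralClosure.isFractionRing_of_finite_extension K[X] F L A
  have : Module.Finite K[X] A := IsIntegralClosure.finite K[X] F L A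
  have halg : ∀ p : K[X], algebraMap K[X] L p = aeval y⁻¹ p := by
    intro p
    rw [hy, aeval_algebraMap_apply, aeval_X_left_apply]
  set t : L := y⁻¹ with htdef
  have ht0 : t ≠ 0 := inv_ne_zero hy0
  let tA : A := algebraMap K[X] A X
  have htA : algebraMap A L tA = t := by rw [hy]; rfl
  let θ : Derivation K L L := y • δ
  have hθt : θ t = -t := by
    change y • δ t = -t
    rw [htdef, Derivation.leibniz_inv, hδ]
    simp only [smul_eq_mul]
    field_simp
  have hKv : ∀ (w : HeightOneSpectrum A) (c : K), w.valuation L (algebraMap K L c) ≤ 1 := by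
    intro w c
    have : algebraMap K L c = algebraMap A L (algebraMap K[X] A (C c)) := by
      rw [← IsScalarTower.algebraMap_apply, halg, aeval_C]
    rw [this]; exact w.valuation_le_one _
  -- the key estimate
  have key : ∀ w : HeightOneSpectrum A, tA ∈ w.asIdeal → ∀ x : L,
      w.valuation L (θ x) ≤ w.valuation L x := by
    intro w hw
    set v := w.valuation L with hv
    have hvt : v t < 1 := by
      rw [← htA]; exact (w.valuation_lt_one_iff_mem _).2 hw
    -- bound on A
    have hbA : ∃ C : ℤ, ∀ a : A, v (θ (algebraMap A L a)) ≤ WithZero.exp C := by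
      obtain ⟨s, hs⟩ := (Module.Finite.fg_top : (⊤ : Submodule K[X] A).FG)
      obtain ⟨C, hC⟩ : ∃ C : ℤ, ∀ a ∈ s, WithZero.log (v (θ (algebraMap A L a))) ≤ C := by
        obtain ⟨C, hC⟩ := (s.image fun a => WithZero.log (v (θ (algebraMap A L a)))).bddAbove
        exact ⟨C, fun a ha => hC (Finset.mem_coe.2 (Finset.mem_image_of_mem _ ha))⟩
      refine ⟨max C 0, fun a => ?_⟩
      have ha : a ∈ Submodule.span K[X] (s : Set A) := hs ▸ Submodule.mem_top
      induction ha using Submodule.span_induction with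
      | mem a ha =>
        exact (WithZero.le_exp_of_log_le (hC a ha)).trans (by simp)
      | zero => simp
      | add a b _ _ iha ihb =>
        rw [map_add, map_add]; exact v.map_add_le iha ihb
      | smul p a _ iha =>
        have h1 : algebraMap A L (p • a) = aeval t p * algebraMap A L a := by
          rw [Algebra.smul_def, map_mul, ← IsScalarTower.algebraMap_apply, halg]
        rw [h1, Derivation.leibniz, Derivation.map_aeval, hθt]
        simp only [smul_eq_mul]
        refine v.map_add_le ?_ ?_
        · rw [map_mul]
          calc _ ≤ 1 * v (θ (algebraMap A L a)) := by
                gcongr; exact psc_v_aeval v (hKv w) hvt.le p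
            _ ≤ _ := by rw [one_mul]; exact iha
        · rw [map_mul, map_mul, Valuation.map_neg]
          calc _ ≤ (1 : ℤᵐ⁰) := mul_le_one' (w.valuation_le_one _)
                (mul_le_one' (psc_v_aeval v (hKv w) hvt.le _) hvt.le)
            _ ≤ _ := by rw [← WithZero.exp_zero, WithZero.exp_le_exp]; exact le_max_right _ _
    obtain ⟨C, hC⟩ := hbA
    refine psc_core v (hKv w) θ t ht0 hvt hθt C ?_ ?_
    · intro u hu
      obtain ⟨n, d, hnd⟩ := w.exists_primeCompl_mul_eq_of_integer u hu
      have hd : v (algebraMap A L d) = 1 := w.valuation_eq_one_iff_notMem.2 d.2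
      have e : θ u * algebraMap A L d = θ (algebraMap A L n) - u * θ (algebraMap A L d) := by
        rw [← hnd, Derivation.leibniz]; simp only [smul_eq_mul]; ring
      have : v (θ u) = v (θ u * algebraMap A L d) := by rw [map_mul, hd, mul_one]
      rw [this, e]
      refine v.map_sub_le (hC _) ?_
      rw [map_mul]
      calc _ ≤ 1 * v (θ (algebraMap A L d)) := by gcongr
        _ ≤ _ := by rw [one_mul]; exact hC _
    · intro u hu
      obtain ⟨a, ha⟩ := w.exists_valuation_sub_lt_of_integer hu 1
      rw [Units.val_one] at ha
      obtain ⟨P, hP, hPa⟩ := IsIntegralClosure.isIntegral K[X] L a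
      let q : K[X] := P.map (constantCoeff : K[X] →+* K)
      have hqm : q.Monic := hP.map _
      refine ⟨q, hqm.ne_zero, ?_⟩
      -- q(a) in w
      let π := Ideal.Quotient.mk w.asIdeal
      have hπ : (π.comp (algebraMap K[X] A)) =
          ((π.comp (algebraMap K[X] A)).comp Polynomial.C).comp constantCoeff := by
        apply Polynomial.ringHom_ext
        · intro c; simp
        · simp only [RingHom.comp_apply, constantCoeff_apply, coeff_X_zero, map_zero]
          exact Ideal.Quotient.eq_zero_iff_mem.2 hw
      have hqa : eval₂ ((algebraMap K[X] A).comp Polynomial.C) a q ∈ w.asIdeal := by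
        rw [← Ideal.Quotient.eq_zero_iff_mem]
        have h0 : π (eval₂ (algebraMap K[X] A) a P) = 0 := by rw [hPa, map_zero]
        rw [Polynomial.hom_eval₂] at h0 ⊢
        rw [hπ, ← eval₂_map] at h0
        exact h0
      have hva : v (aeval (algebraMap A L a) q) < 1 := by
        have : aeval (algebraMap A L a) q
            = algebraMap A L (eval₂ ((algebraMap K[X] A).comp Polynomial.C) a q) := by
          rw [Polynomial.hom_eval₂, aeval_def]
          congr 1
          ext c
          simp only [RingHom.comp_apply]
          rw [← IsScalarTower.algebraMap_apply, halg, aeval_C]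
        rw [this]; exact (w.valuation_lt_one_iff_mem _).2 hqa
      have hvaL : v (algebraMap A L a) ≤ 1 := w.valuation_le_one _
      have hdiff : v (aeval u q - aeval (algebraMap A L a) q) < 1 := by
        refine (psc_v_sub v (hKv w) hu hvaL q).trans_lt ?_
        rw [Valuation.map_sub_swap]; exact ha
      have : aeval u q = (aeval u q - aeval (algebraMap A L a) q) + aeval (algebraMap A L a) q := by
        ring
      rw [this]
      exact v.map_add_lt hdiff hva
  -- finitely many places over infinity
  have hfin : {w : HeightOneSpectrum A | tA ∈ w.asIdeal}.Finite := by
    have h0 : Ideal.span {tA} ≠ 0 := by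
      rw [Ne, Ideal.zero_eq_bot, Ideal.span_singleton_eq_bot]
      intro h; rw [h, map_zero] at htA; exact ht0 htA.symm
    refine (Ideal.finite_factors h0).subset fun w hw => ?_
    exact Ideal.dvd_span_singleton.2 hw
  obtain ⟨M, hM⟩ : ∃ M : ℕ, ∀ w : HeightOneSpectrum A, tA ∈ w.asIdeal →
      w.valuation L f ≤ WithZero.exp (M : ℤ) := by
    obtain ⟨C, hC⟩ := (hfin.toFinset.image fun w : HeightOneSpectrum A =>
      WithZero.log (w.valuation L f)).bddAbove
    refine ⟨C.toNat, fun w hw => WithZero.le_exp_of_log_le ?_⟩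
    have : WithZero.log (w.valuation L f) ≤ C := hC (by
      simp only [Finset.coe_image, Set.mem_image, Finset.mem_coe, Set.Finite.mem_toFinset]
      exact ⟨w, hw, rfl⟩)
    omega
  have hdec : ∀ w : HeightOneSpectrum A, tA ∈ w.asIdeal → ∀ n : ℕ,
      w.valuation L (δ^[n] f) ≤ WithZero.exp ((M : ℤ) - n) := by
    intro w hw n
    induction n with
    | zero => simpa using hM w hw
    | succ n ih =>
      rw [Function.iterate_succ_apply']
      have e : δ (δ^[n] f) = t * θ (δ^[n] f) := by
        change _ = t * (y • δ _)
        rw [smul_eq_mul, ← mul_assoc, htdef, inv_mul_cancel₀ hy0, one_mul]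
      have hvt : w.valuation L t ≤ WithZero.exp (-1 : ℤ) := by
        have h1 : w.valuation L t < 1 := by
          rw [← htA]; exact (w.valuation_lt_one_iff_mem _).2 hw
        obtain ⟨b, hb⟩ : ∃ a : ℤ, w.valuation L t = WithZero.exp a :=
          ⟨_, (WithZero.exp_log ((w.valuation L).ne_zero_iff.2 ht0)).symm⟩
        rw [hb, ← WithZero.exp_zero, WithZero.exp_lt_exp] at h1
        rw [hb, WithZero.exp_le_exp]; omega
      rw [e, map_mul]
      calc _ ≤ WithZero.exp (-1 : ℤ) * WithZero.exp ((M : ℤ) - n) :=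
            mul_le_mul' hvt ((key w hw _).trans ih)
        _ = _ := by rw [← WithZero.exp_add]; congr 1; push_cast; ring
  have hgA : δ^[M] f ∈ (algebraMap A L).range := by
    refine HeightOneSpectrum.mem_integers_of_valuation_le_one L _ fun w => ?_
    by_cases hw : tA ∈ w.asIdeal
    · simpa using hdec w hw M
    · refine psc_int_val _ _ ?_ (hf M)
      intro p
      refine psc_v_aeval _ (hKv w) ?_ p
      have : w.valuation L t = 1 := by rw [← htA]; exact w.valuation_eq_one_iff_notMem.2 hw
      have h2 : w.valuation L y = 1 := by
        rw [htdef, map_inv₀, inv_eq_one] at this; exact this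
      exact h2.le
  refine ⟨M + 1, ?_⟩
  rw [Function.iterate_succ_apply']
  apply psc_alg_const
  refine psc_both y _ (hf M) ?_
  obtain ⟨a, ha⟩ := hgA
  have hi : IsIntegral K[X] (algebraMap A L a) := a.2
  rw [ha] at hi
  obtain ⟨p, hp, hp0⟩ := hi
  refine ⟨p, hp, ?_⟩
  rw [← hp0]
  congr 1
  exact RingHom.ext fun p => (halg p).symm

end onevar

section multi

theorem psc_ext {k S T : Type*} [CommRing k] [CommRing S] [CommRing T] [Algebra k S] [Algebra k T]
    [Algebra S T] [IsScalarTower k S T] [Algebra.FormallyEtale S T] (d : Derivation k S S) :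
    ∃ d' : Derivation k T T, ∀ s, d' (algebraMap S T s) = algebraMap S T (d s) := by
  let l : Ω[S⁄k] →ₗ[S] T := (Algebra.linearMap S T).comp d.liftKaehlerDifferential
  let e := (KaehlerDifferential.tensorKaehlerEquivOfFormallyEtale k S T).symm
  let l' : Ω[T⁄k] →ₗ[T] T := (LinearMap.liftBaseChange T l).comp e.toLinearMap
  refine ⟨l'.compDer (KaehlerDifferential.D k T), fun s => ?_⟩
  change (LinearMap.liftBaseChange T l) (e (KaehlerDifferential.D k T (algebraMap S T s))) = _
  rw [KaehlerDifferential.tensorKaehlerEquivOfFormallyEtale_symm_D_algebraMap]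
  simp [l]

theorem psc_uniq {k S T : Type*} [CommRing k] [CommRing S] [CommRing T] [Algebra k S] [Algebra k T]
    [Algebra S T] [IsScalarTower k S T] [Algebra.FormallyUnramified S T] (d : Derivation k T T)
    (h : ∀ s, d (algebraMap S T s) = 0) (x : T) : d x = 0 := by
  let d' : Derivation S T T := Derivation.mk'
    { toFun := d
      map_add' := map_add d
      map_smul' := fun s x => by
        rw [Algebra.smul_def, Derivation.leibniz, h, smul_zero, add_zero, smul_eq_mul,
          ← Algebra.smul_def]; rfl } (fun a b => d.leibniz a b)
  have : d' x = d'.liftKaehlerDifferential (KaehlerDifferential.D S T x) := by simp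
  rw [Subsingleton.elim (KaehlerDifferential.D S T x) 0, map_zero] at this
  exact this

theorem psc_locnil {n : ℕ} {k D L : Type*} [Field k] [CharZero k]
    [CommRing D] [IsDomain D] [Algebra k D]
    [Algebra (MvPolynomial (Fin n) k) D] [IsScalarTower k (MvPolynomial (Fin n) k) D]
    [Module.Finite (MvPolynomial (Fin n) k) D]
    [Field L] [Algebra D L] [IsFractionRing D L] [Algebra k L] [IsScalarTower k D L]
    [Algebra (MvPolynomial (Fin n) k) L] [IsScalarTower (MvPolynomial (Fin n) k) D L]
    [IsScalarTower k (MvPolynomial (Fin n) k) L]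
    (i : Fin n) (d : Derivation k D D)
    (hd : ∀ j, d (algebraMap (MvPolynomial (Fin n) k) D (.X j)) = if j = i then 1 else 0) (f : D) :
    ∃ m : ℕ, d^[m] f = 0 := by
  classical
  let B := MvPolynomial (Fin n) k
  have : Algebra.FormallyEtale D L := Algebra.FormallyEtale.of_isLocalization (nonZeroDivisors D)
  obtain ⟨δ₀, hδ₀⟩ := psc_ext (k := k) (S := D) (T := L) d
  let Y : Fin n → L := fun j => algebraMap B L (.X j)
  have hY : ∀ j, δ₀ (Y j) = if j = i then 1 else 0 := by
    intro j
    change δ₀ (algebraMap B L (.X j)) = _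
    rw [IsScalarTower.algebraMap_apply B D L, hδ₀, hd]
    split_ifs <;> simp
  let N : IntermediateField k L :=
    { carrier := {x | δ₀ x = 0}
      mul_mem' := by
        intro a b ha hb
        simp only [Set.mem_ofPred_eq] at *
        simp [ha, hb]
      add_mem' := by
        intro a b ha hb
        simp only [Set.mem_ofPred_eq] at *
        simp [ha, hb]
      algebraMap_mem' := by intro c; simp
      inv_mem' := by
        intro a ha
        simp only [Set.mem_ofPred_eq] at *
        simp [Derivation.leibniz_inv, ha] }
  let K := IntermediateField.adjoin k (Y '' {j | j ≠ i})
  have hKN : K ≤ N := by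
    rw [IntermediateField.adjoin_le_iff]
    rintro _ ⟨j, hj, rfl⟩
    change δ₀ (Y j) = 0
    rw [hY, if_neg hj]
  let δ : Derivation K L L := Derivation.mk'
    { toFun := δ₀
      map_add' := map_add δ₀
      map_smul' := fun c x => by
        have hc : δ₀ (c : L) = 0 := hKN c.2
        change δ₀ ((c : L) * x) = (c : L) * δ₀ x
        rw [Derivation.leibniz, hc, smul_zero, add_zero, smul_eq_mul] }
    (fun a b => δ₀.leibniz a b)
  have hδδ : ∀ x, δ x = δ₀ x := fun _ => rfl
  set y : L := Y i with hy
  have hδy : δ y = 1 := by rw [hδδ, hY, if_pos rfl]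
  have hy0 : y ≠ 0 := by intro h; rw [h] at hδy; simp at hδy
  have : CharZero K := inferInstance
  let algX : Algebra K[X] L := ((aeval y⁻¹ : K[X] →ₐ[K] L) : K[X] →+* L).toAlgebra
  have halg : ∀ p : K[X], algebraMap K[X] L p = aeval y⁻¹ p := fun _ => rfl
  have : IsScalarTower K K[X] L := IsScalarTower.of_algebraMap_eq fun c => by
    rw [halg]; simp
  have hinj : Function.Injective (algebraMap K[X] L) := by
    rw [injective_iff_map_eq_zero]
    intro p hp
    by_contra hp0
    have h1 : IsIntegral K (y⁻¹) := IsAlgebraic.isIntegral ⟨p, hp0, hp⟩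
    have h2 := psc_alg_const δ h1.inv
    rw [inv_inv, hδy] at h2
    exact one_ne_zero h2
  let F := FractionRing K[X]
  let algF : Algebra F L := (IsFractionRing.lift hinj : F →+* L).toAlgebra
  have : IsScalarTower K[X] F L := IsScalarTower.of_algebraMap_eq fun p => by
    exact (IsFractionRing.lift_algebraMap hinj p).symm
  have hKmem : ∀ j, j ≠ i → Y j ∈ K := fun j hj =>
    IntermediateField.subset_adjoin _ _ ⟨j, hj, rfl⟩
  let γ : B →+* K[X] := MvPolynomial.eval₂Hom ((C : K →+* K[X]).comp (algebraMap k K))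
    (fun j => if h : j = i then X else C ⟨Y j, hKmem j h⟩)
  have hγ : ((aeval y : K[X] →ₐ[K] L) : K[X] →+* L).comp γ = algebraMap B L := by
    apply MvPolynomial.ringHom_ext
    · intro c
      simp only [γ, RingHom.comp_apply, MvPolynomial.coe_eval₂Hom, MvPolynomial.eval₂_C]
      change aeval y (C (algebraMap k K c)) = _
      rw [aeval_C, ← IsScalarTower.algebraMap_apply k K L, ← MvPolynomial.algebraMap_eq,
        ← IsScalarTower.algebraMap_apply]
    · intro j
      simp only [γ, RingHom.comp_apply, MvPolynomial.coe_eval₂Hom, MvPolynomial.eval₂_X]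
      change aeval y _ = Y j
      split_ifs with h
      · rw [aeval_X, h]
      · rw [aeval_C]; rfl
  let β : B →+* F := MvPolynomial.eval₂Hom
    ((algebraMap K[X] F).comp ((C : K →+* K[X]).comp (algebraMap k K)))
    (fun j => if h : j = i then (algebraMap K[X] F X)⁻¹ else algebraMap K[X] F (C ⟨Y j, hKmem j h⟩))
  have hβ : (algebraMap F L).comp β = algebraMap B L := by
    apply MvPolynomial.ringHom_ext
    · intro c
      simp only [β, RingHom.comp_apply, MvPolynomial.coe_eval₂Hom, MvPolynomial.eval₂_C]
      rw [← IsScalarTower.algebraMap_apply K[X] F L, halg,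
        aeval_C, ← IsScalarTower.algebraMap_apply k K L, ← MvPolynomial.algebraMap_eq,
        ← IsScalarTower.algebraMap_apply]
    · intro j
      simp only [β, MvPolynomial.coe_eval₂Hom, RingHom.comp_apply, MvPolynomial.eval₂_X]
      change _ = Y j
      split_ifs with h
      · rw [map_inv₀, ← IsScalarTower.algebraMap_apply K[X] F L, halg, aeval_X, inv_inv, h]
      · rw [← IsScalarTower.algebraMap_apply K[X] F L, halg, aeval_C]; rfl
  have hβp : ∀ p, algebraMap B L p = algebraMap F L (β p) := fun p => by
    rw [← hβ]; rfl
  have hDint : ∀ a : D, IsIntegral B a := fun a => Algebra.IsIntegral.isIntegral a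
  have hDL : ∀ a : D, IsIntegral B (algebraMap D L a) := fun a => (hDint a).algebraMap
  have hfin : FiniteDimensional F L := by
    obtain ⟨s, hs⟩ := (Module.Finite.fg_top : (⊤ : Submodule B D).FG)
    let E := IntermediateField.adjoin F ((algebraMap D L) '' (s : Set D))
    have : Finite ((algebraMap D L) '' (s : Set D)) := (s.finite_toSet.image _).to_subtype
    have hE : FiniteDimensional F E := by
      apply IntermediateField.finiteDimensional_adjoin
      rintro _ ⟨a, _, rfl⟩
      obtain ⟨p, hp, hp0⟩ := hDL a
      refine ⟨p.map β, hp.map _, ?_⟩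
      rw [eval₂_map, hβ]
      exact hp0
    have hDE : ∀ a : D, algebraMap D L a ∈ E := by
      intro a
      have ha : a ∈ Submodule.span B (s : Set D) := hs ▸ Submodule.mem_top
      induction ha using Submodule.span_induction with
      | mem a ha => exact IntermediateField.subset_adjoin _ _ ⟨a, ha, rfl⟩
      | zero => rw [map_zero]; exact E.zero_mem
      | add a b _ _ iha ihb => rw [map_add]; exact E.add_mem iha ihb
      | smul p a _ iha =>
        rw [Algebra.smul_def, map_mul, ← IsScalarTower.algebraMap_apply, hβp]
        exact E.mul_mem (E.algebraMap_mem _) iha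
    have htop : E = ⊤ := by
      rw [eq_top_iff]
      intro x _
      obtain ⟨a, b, _, rfl⟩ := IsFractionRing.div_surjective (A := D) x
      exact E.div_mem (hDE a) (hDE b)
    rw [htop] at hE
    exact IntermediateField.topEquiv.toLinearEquiv.finiteDimensional
  have hiter : ∀ m : ℕ, δ^[m] (algebraMap D L f) = algebraMap D L (d^[m] f) := by
    intro m
    induction m with
    | zero => rfl
    | succ m ih =>
      rw [Function.iterate_succ_apply', Function.iterate_succ_apply', ih, hδδ, hδ₀]
  obtain ⟨m, hm⟩ := psc_onevar (K := K) (F := F) (L := L) δ y (by rw [halg, aeval_X]) hδy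
    (algebraMap D L f) (fun m => by
      rw [hiter]
      obtain ⟨p, hp, hp0⟩ := hDL (d^[m] f)
      refine ⟨p.map γ, hp.map _, ?_⟩
      rw [eval₂_map, hγ]
      exact hp0)
  refine ⟨m, IsFractionRing.injective D L ?_⟩
  rw [← hiter, hm, map_zero]

end multi

section final

theorem psc_const {n : ℕ} {k D : Type*} [Field k] [IsAlgClosed k] [CharZero k]
    [CommRing D] [IsDomain D] [Algebra k D]
    [Algebra (MvPolynomial (Fin n) k) D] [IsScalarTower k (MvPolynomial (Fin n) k) D]
    (hinj : Function.Injective (algebraMap (MvPolynomial (Fin n) k) D))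
    [Module.Finite (MvPolynomial (Fin n) k) D]
    (d : Fin n → Derivation k D D)
    (hd : ∀ i b, d i (algebraMap (MvPolynomial (Fin n) k) D b) =
      algebraMap (MvPolynomial (Fin n) k) D (MvPolynomial.pderiv i b))
    (f : D) (hf : ∀ i, d i f = 0) :
    ∃ c : k, f = algebraMap k D c := by
  classical
  let B := MvPolynomial (Fin n) k
  have : Module.IsTorsionFree B D := Module.isTorsionFree_iff_faithfulSMul.2
    ((faithfulSMul_iff_algebraMap_injective B D).2 hinj)
  have hint : IsIntegral B f := Algebra.IsIntegral.isIntegral f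
  set p := minpoly B f with hp
  have hmon : p.Monic := minpoly.monic hint
  have hp0 : aeval f p = 0 := minpoly.aeval B f
  have hcoef : ∀ i m, MvPolynomial.pderiv i (p.coeff m) = 0 := by
    intro i
    let q : B[X] := ∑ m ∈ Finset.range p.natDegree, C (MvPolynomial.pderiv i (p.coeff m)) * X ^ m
    have hpow : ∀ m : ℕ, d i (f ^ m) = 0 := fun m => by
      rw [Derivation.leibniz_pow, hf, smul_zero, smul_zero]
    have hq : aeval f q = 0 := by
      have h1 : d i (aeval f p) = 0 := by rw [hp0, map_zero]
      rw [aeval_eq_sum_range, map_sum, Finset.sum_range_succ] at h1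
      have h2 : ∀ m, d i (p.coeff m • f ^ m) =
          algebraMap B D (MvPolynomial.pderiv i (p.coeff m)) * f ^ m := by
        intro m
        rw [Algebra.smul_def, Derivation.leibniz, hpow, smul_zero, zero_add, smul_eq_mul, hd,
          mul_comm]
      simp only [h2] at h1
      rw [hmon.coeff_natDegree, Derivation.map_one_eq_zero, map_zero, zero_mul, add_zero] at h1
      simp only [q, map_sum, map_mul, map_pow, aeval_C, aeval_X]
      exact h1
    have hq0 : q = 0 := by
      by_contra hne
      have h1 := minpoly.IsIntegrallyClosed.degree_le_of_ne_zero (R := B) hne hq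
      have h2 : q.degree < p.natDegree := by
        apply lt_of_le_of_lt (degree_sum_le _ _)
        rw [Finset.sup_lt_iff (WithBot.bot_lt_coe _)]
        intro m hm
        apply lt_of_le_of_lt (degree_C_mul_X_pow_le _ _)
        exact_mod_cast Finset.mem_range.1 hm
      rw [← hp, degree_eq_natDegree hmon.ne_zero] at h1
      exact absurd h2 (not_lt.2 h1)
    intro m
    rcases lt_trichotomy m p.natDegree with h | h | h
    · have := congrArg (fun r => coeff r m) hq0
      simp only [q, finsetSum_coeff, coeff_C_mul_X_pow, coeff_zero] at this
      rw [Finset.sum_ite_eq, if_pos (Finset.mem_range.2 h)] at this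
      exact this
    · rw [h, hmon.coeff_natDegree, Derivation.map_one_eq_zero]
    · rw [coeff_eq_zero_of_natDegree_lt h, map_zero]
  have hcst : ∀ b : B, (∀ i, MvPolynomial.pderiv i b = 0) → b = MvPolynomial.C (b.coeff 0) := by
    intro b hb
    ext m
    rw [MvPolynomial.coeff_C]
    split_ifs with h
    · rw [h]
    · obtain ⟨i, hi⟩ : ∃ i, m i ≠ 0 := by
        by_contra! hh
        exact h (Finsupp.ext fun i => (hh i).symm)
      have h1 := congrArg (MvPolynomial.coeff (m - Finsupp.single i 1)) (hb i)
      rw [MvPolynomial.coeff_pderiv, MvPolynomial.coeff_zero, tsub_add_cancel_of_le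
        (Finsupp.single_le_iff.2 (Nat.one_le_iff_ne_zero.2 hi))] at h1
      rcases mul_eq_zero.1 h1 with h2 | h2
      · exact h2
      · exact absurd h2 (Nat.cast_add_one_ne_zero _)
  have hcst2 : ∀ m, p.coeff m = MvPolynomial.C ((p.coeff m).coeff 0) := fun m =>
    hcst _ fun i => hcoef i m
  have halgk : IsIntegral k f := by
    refine ⟨p.map (MvPolynomial.constantCoeff), hmon.map _, ?_⟩
    have : (p.map MvPolynomial.constantCoeff).map (MvPolynomial.C : k →+* B) = p := by
      ext1 m
      rw [coeff_map, coeff_map]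
      exact (hcst2 m).symm
    have h3 : algebraMap k D = (algebraMap B D).comp (MvPolynomial.C : k →+* B) := by
      rw [← MvPolynomial.algebraMap_eq]
      exact IsScalarTower.algebraMap_eq k B D
    rw [h3, ← eval₂_map, this]
    exact hp0
  obtain ⟨c, hc⟩ := (IsAlgClosed.algebraMap_bijective_of_isIntegral (k := k)
    (K := integralClosure k D)).2 ⟨f, halgk⟩
  exact ⟨c, (congrArg Subtype.val hc).symm⟩

theorem psc_surj {n : ℕ} {k D : Type*} [Field k] [IsAlgClosed k] [CharZero k]
    [CommRing D] [IsDomain D] [Algebra k D]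
    [Algebra (MvPolynomial (Fin n) k) D] [IsScalarTower k (MvPolynomial (Fin n) k) D]
    (d : Fin n → Derivation k D D)
    (hd : ∀ i b, d i (algebraMap (MvPolynomial (Fin n) k) D b) =
      algebraMap (MvPolynomial (Fin n) k) D (MvPolynomial.pderiv i b))
    (hcomm : ∀ i j f, d i (d j f) = d j (d i f))
    (hnil : ∀ i f, ∃ m : ℕ, (d i)^[m] f = 0)
    (hconst : ∀ f : D, (∀ i, d i f = 0) → ∃ c : k, f = algebraMap k D c)
    (T : Finset (Fin n)) :
    ∀ f : D, (∀ i, i ∉ T → d i f = 0) → f ∈ (algebraMap (MvPolynomial (Fin n) k) D).range := by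
  classical
  induction T using Finset.induction_on with
  | empty =>
    intro f hf
    obtain ⟨c, rfl⟩ := hconst f fun i => hf i (Finset.notMem_empty i)
    exact ⟨algebraMap k _ c, (IsScalarTower.algebraMap_apply k (MvPolynomial (Fin n) k) D c).symm⟩
  | insert a T ha ih =>
    have key : ∀ N : ℕ, ∀ f : D, (∀ i, i ∉ insert a T → d i f = 0) → (d a)^[N] f = 0 →
        f ∈ (algebraMap (MvPolynomial (Fin n) k) D).range := by
      intro N
      induction N with
      | zero =>
        intro f _ h
        rw [Function.iterate_zero, id] at h
        rw [h]; exact zero_mem _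
      | succ N ihN =>
        intro f hf hN
        set c := (d a)^[N] f with hc
        have hdac : d a c = 0 := by rw [hc, ← Function.iterate_succ_apply' (d a)]; exact hN
        have hci : ∀ i, i ∉ T → d i c = 0 := by
          intro i hi
          by_cases hia : i = a
          · rw [hia]; exact hdac
          · have : ∀ m : ℕ, d i ((d a)^[m] f) = 0 := by
              intro m
              induction m with
              | zero => exact hf i (by simp [hia, hi])
              | succ m ihm => rw [Function.iterate_succ_apply', hcomm, ihm, map_zero]
            exact this N
        have hcr := ih c hci
        set y : D := algebraMap (MvPolynomial (Fin n) k) D (.X a) with hy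
        have hya : d a y = 1 := by rw [hy, hd, MvPolynomial.pderiv_X_self, map_one]
        have hyi : ∀ i, i ≠ a → d i y = 0 := fun i hi => by
          rw [hy, hd, MvPolynomial.pderiv_X_of_ne hi.symm, map_zero]
        have hit : ∀ m : ℕ, (d a)^[m] (y ^ m * c) = (m.factorial : D) * c := by
          intro m
          induction m with
          | zero => simp
          | succ m ihm =>
            have h1 : d a (y ^ (m + 1) * c) = (m + 1 : ℕ) • (y ^ m * c) := by
              rw [Derivation.leibniz, hdac, smul_zero, zero_add, Derivation.leibniz_pow, hya]
              simp only [smul_eq_mul, nsmul_eq_mul, Nat.add_sub_cancel]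
              ring
            have h2 : ∀ (q m : ℕ) (x : D), (d a)^[m] (q • x) = q • (d a)^[m] x := by
              intro q m x
              induction m with
              | zero => rfl
              | succ m ih => rw [Function.iterate_succ_apply', Function.iterate_succ_apply', ih,
                  map_nsmul]
            rw [Function.iterate_succ_apply, h1, h2, ihm, nsmul_eq_mul, Nat.factorial_succ]
            push_cast
            ring
        set u : k := ((N.factorial : k))⁻¹ with hu
        have hlin : ∀ (m : ℕ) (x z : D), (d a)^[m] (x - u • z) = (d a)^[m] x - u • (d a)^[m] z := by
          intro m x z
          induction m with
          | zero => rfl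
          | succ m ih =>
            simp only [Function.iterate_succ_apply', ih, map_sub, Derivation.map_smul]
        have hg : f - u • (y ^ N * c) ∈ (algebraMap (MvPolynomial (Fin n) k) D).range := by
          apply ihN
          · intro i hi
            rw [Finset.mem_insert, not_or] at hi
            rw [map_sub, Derivation.map_smul, hf i (by simp [hi.1, hi.2]), Derivation.leibniz,
              hci i hi.2, Derivation.leibniz_pow, hyi i hi.1]
            simp
          · have hne : (N.factorial : k) ≠ 0 := by exact_mod_cast N.factorial_ne_zero
            rw [hlin, hit, ← hc, Algebra.smul_def, ← mul_assoc, ← map_natCast (algebraMap k D),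
              ← map_mul, hu, inv_mul_cancel₀ hne, map_one, one_mul, sub_self]
        have hz : u • (y ^ N * c) ∈ (algebraMap (MvPolynomial (Fin n) k) D).range := by
          rw [Algebra.smul_def]
          refine mul_mem ?_ (mul_mem (pow_mem (RingHom.mem_range_self _ _) _) hcr)
          exact ⟨algebraMap k _ u,
            (IsScalarTower.algebraMap_apply k (MvPolynomial (Fin n) k) D u).symm⟩
        have := add_mem hg hz
        rwa [sub_add_cancel] at this
    intro f hf
    obtain ⟨m, hm⟩ := hnil a f
    exact key m f hf hm

theorem psc_pderiv_comm {n : ℕ} {k : Type*} [Field k] (i j : Fin n) (p : MvPolynomial (Fin n) k) :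
    MvPolynomial.pderiv i (MvPolynomial.pderiv j p) =
      MvPolynomial.pderiv j (MvPolynomial.pderiv i p) := by
  classical
  have h : ⁅(MvPolynomial.pderiv i : Derivation k (MvPolynomial (Fin n) k) (MvPolynomial (Fin n) k)),
      (MvPolynomial.pderiv j : Derivation k (MvPolynomial (Fin n) k) (MvPolynomial (Fin n) k))⁆ = 0 := by
    apply MvPolynomial.derivation_ext
    intro l
    rw [Derivation.commutator_apply, MvPolynomial.pderiv_X, MvPolynomial.pderiv_X]
    simp only [Pi.single_apply]
    split_ifs <;> simp
  have h2 := DFunLike.congr_fun h p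
  rw [Derivation.commutator_apply] at h2
  exact sub_eq_zero.1 h2

end final

end

/-- Simple connectivity of affine space: let `k` be an algebraically closed field of
characteristic zero, `B = k[Y_1, ..., Y_n]` a polynomial ring and `D` a `k`-affine domain.
If `D` is finite etale over `B`, then `D = B`. -/
theorem polynomial_ring_simply_connected
    (n : ℕ) (k D : Type*) [Field k] [IsAlgClosed k] [CharZero k]
    [CommRing D] [IsDomain D] [Algebra k D] [Algebra.FiniteType k D]
    [Algebra (MvPolynomial (Fin n) k) D] [IsScalarTower k (MvPolynomial (Fin n) k) D]
    (hinj : Function.Injective (algebraMap (MvPolynomial (Fin n) k) D))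
    -- `D` is module-finite over `B`
    [Module.Finite (MvPolynomial (Fin n) k) D]
    -- `D` is unramified and flat (etale) over `B`
    (hunr : Algebra.FormallyUnramified (MvPolynomial (Fin n) k) D)
    (hflat : Module.Flat (MvPolynomial (Fin n) k) D) :
    Function.Bijective (algebraMap (MvPolynomial (Fin n) k) D) := by
  refine ⟨hinj, fun f => ?_⟩
  have hft : Algebra.FiniteType (MvPolynomial (Fin n) k) D := inferInstance
  have hfp : Algebra.FinitePresentation (MvPolynomial (Fin n) k) D :=
    Algebra.FinitePresentation.of_finiteType.1 hft
  have het : Algebra.Etale (MvPolynomial (Fin n) k) D :=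
    Algebra.Etale.of_formallyUnramified_of_flat
  have hfe : Algebra.FormallyEtale (MvPolynomial (Fin n) k) D := inferInstance
  choose d hd using fun i : Fin n =>
    psc_ext (k := k) (S := MvPolynomial (Fin n) k) (T := D) (MvPolynomial.pderiv i)
  have hcomm : ∀ i j f, d i (d j f) = d j (d i f) := by
    intro i j f
    have h := psc_uniq (S := MvPolynomial (Fin n) k) ⁅d i, d j⁆ (fun s => by
      rw [Derivation.commutator_apply, hd, hd, hd, hd]
      rw [psc_pderiv_comm, sub_self]) f
    rw [Derivation.commutator_apply] at h
    exact sub_eq_zero.1 h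
  have hnil : ∀ i f, ∃ m : ℕ, (d i)^[m] f = 0 := by
    intro i f
    refine psc_locnil (L := FractionRing D) i (d i) (fun j => ?_) f
    rw [hd]
    split_ifs with h
    · rw [h, MvPolynomial.pderiv_X_self, map_one]
    · rw [MvPolynomial.pderiv_X_of_ne h, map_zero]
  exact psc_surj d hd hcomm hnil (psc_const hinj d hd) Finset.univ f
    (fun i hi => absurd (Finset.mem_univ i) hi)
end

section
/- (Zariski's Main Theorem) Let A be an integral domain and let B be an A-algebra of finite type that is quasi-finite over A. Let Ā be the integral closure of A in B. Then the canonical morphism Spec(B) → Spec(Ā) is an open immersion. -/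
universe u

open AlgebraicGeometry CategoryTheory in
theorem isOpenImmersion_aux {R S : CommRingCat.{u}} (f : R ⟶ S)
    (h : ∀ Q : PrimeSpectrum S, ∃ r : R, f.hom r ∉ Q.asIdeal ∧
      Function.Bijective (Localization.awayMap f.hom r)) :
    IsOpenImmersion (Spec.map f) := by
  choose r hr hbij using h
  refine IsZariskiLocalAtTarget.of_range_subset_iSup
    (P := @IsOpenImmersion)
    (fun Q : PrimeSpectrum S => (PrimeSpectrum.basicOpen (r Q) : (Spec R).Opens)) ?_ ?_
  · rintro _ ⟨Q, rfl⟩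
    exact TopologicalSpace.Opens.mem_iSup.mpr ⟨Q, hr Q⟩
  · intro Q
    refine (MorphismProperty.arrow_mk_iso_iff @IsOpenImmersion
      (SpecMapRestrictBasicOpenIso f (r Q))).mpr ?_
    have : IsIso (CommRingCat.ofHom (Localization.awayMap f.hom (r Q))) :=
      (ConcreteCategory.isIso_iff_bijective _).mpr (hbij Q)
    infer_instance

/-- **Zariski's Main Theorem.**  Let `A` be an integral domain and `B` an `A`-algebra of
finite type which is quasi-finite over `A` (every fiber of `Spec B → Spec A` is finite and
discrete).  Let `Ā` be the integral closure of `A` in `B`.  Then the canonical morphism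
`Spec B → Spec Ā` is an open immersion. -/
theorem zariski_main_theorem
    (A B : Type u) [CommRing A] [IsDomain A] [CommRing B]
    [Algebra A B] [Algebra.FiniteType A B]
    -- `B` is quasi-finite over `A`: the fibers of `Spec B → Spec A` are finite and discrete
    (hqf : ∀ p : PrimeSpectrum A,
      {Q : PrimeSpectrum B | PrimeSpectrum.comap (algebraMap A B) Q = p}.Finite ∧
      DiscreteTopology {Q : PrimeSpectrum B | PrimeSpectrum.comap (algebraMap A B) Q = p}) :
    AlgebraicGeometry.IsOpenImmersion
      (AlgebraicGeometry.Spec.map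
        (CommRingCat.ofHom (algebraMap (integralClosure A B) B))) := by
  have key : ∀ Q : PrimeSpectrum B, Algebra.ZariskisMainProperty A Q.asIdeal := by
    intro Q
    have := (hqf (PrimeSpectrum.comap (algebraMap A B) Q)).2
    have : Algebra.QuasiFiniteAt A Q.asIdeal :=
      Algebra.QuasiFiniteAt.of_isOpen_singleton_fiber Q
        (@isOpen_discrete _ _ this _)
    exact .of_finiteType _
  refine isOpenImmersion_aux _ fun Q => ?_
  obtain ⟨r, hr, hb⟩ := key Q
  exact ⟨r, hr, hb⟩
end
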